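/- For any two vectors x, y in F_q^n, q times the symplectic weight of the concatenated vector (x | y) equals the Hamming weight of x plus the Hamming weight of y plus the sum over all nonzero scalars α in F_q of the Hamming weight of x + αy. Here the symplectic weight of (x | y) is the number of indices i in [0, n-1] such that (x_i, y_i) ≠ (0, 0). -/

import Mathlib

open Finset

theorem coord_identity {F : Type*} [Field F] [Fintype F] [DecidableEq F] (a b : F) :
    Fintype.card F * (if a ≠ 0 ∨ b ≠ 0 then 1 else 0)
      = (if b ≠ 0 then 1 else 0) + ∑ α : F, (if a + α * b ≠ 0 then 1 else 0) := by
  by_cases hb : b = 0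
  · subst hb
    by_cases ha : a = 0 <;> simp [ha]
  · have h : ∀ α : F, (a + α * b ≠ 0) ↔ α ≠ -a / b := by
      intro α
      rw [not_iff_not, eq_div_iff hb, eq_neg_iff_add_eq_zero, add_comm]
    simp only [h]
    rw [← Finset.card_filter, Finset.filter_ne', Finset.card_erase_of_mem (Finset.mem_univ _),
      Finset.card_univ]
    have : 0 < Fintype.card F := Fintype.card_pos
    simp [hb]
    omega

/-- Lemma 1 (symplectic/Hamming weight identity): for x, y in F_q^n,
q · w_s(x|y) = w_H(x) + w_H(y) + ∑_{α ∈ F_q^*} w_H(x + α y). -/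
theorem symplectic_hamming_identity {F : Type*} [Field F] [Fintype F] [DecidableEq F]
    {n : ℕ} (x y : Fin n → F) :
    Fintype.card F * (univ.filter fun i : Fin n => x i ≠ 0 ∨ y i ≠ 0).card
      = hammingNorm x + hammingNorm y +
        ∑ α ∈ univ.filter (fun α : F => α ≠ 0), hammingNorm (x + α • y) := by
  have e : hammingNorm x + ∑ α ∈ univ.filter (fun α : F => α ≠ 0), hammingNorm (x + α • y)
      = ∑ α : F, hammingNorm (x + α • y) := by
    rw [Finset.filter_ne', ← Finset.add_sum_erase univ _ (Finset.mem_univ (0 : F))]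
    simp
  rw [add_right_comm, e]
  simp only [hammingNorm, Finset.card_filter, Pi.add_apply, Pi.smul_apply, smul_eq_mul]
  rw [Finset.sum_comm, Finset.mul_sum, ← Finset.sum_add_distrib]
  refine Finset.sum_congr rfl fun i _ => ?_
  rw [coord_identity, add_comm]
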